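/- Every topologically transitive compact dynamical system is either sensitive or almost equicontinuous (i.e., has at least one equicontinuity point). -/

import Mathlib

/-!
If `f` is not sensitive, then for every `δ > 0` some nonempty open set `U` is `δ`-stable: all
iterates keep the images of `U` of diameter at most `δ`. Transitivity spreads this over the space:
if the `n`-th iterate takes a point `x` of an open set `V` into `U`, then near `x` the times `≥ n`
are controlled by the stability of `U`, and the finitely many earlier times by continuity. So the
open set of points having a `δ`-stable neighbourhood is dense, and by the Baire category theorem
some point has `δ`-stable neighbourhoods for every `δ = 1 / (k + 1)`; it is an equicontinuity point.
-/

open Filter Set Metric Topology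

section Defs

variable {X : Type*} [MetricSpace X]

/-- The orbit of a point under a map. -/
def orbitOf (f : X → X) (x : X) : Set X := Set.range fun n : ℕ => f^[n] x

/-- The ω-limit set of `x`: the set of limit points of the orbit. -/
def omegaLimitSet (f : X → X) (x : X) : Set X :=
  ⋂ N : ℕ, closure ((fun n : ℕ => f^[n] x) '' Set.Ici N)

/-- Topological transitivity. -/
def TopTransitive (f : X → X) : Prop :=
  ∀ U V : Set X, IsOpen U → IsOpen V → U.Nonempty → V.Nonempty →
    ∃ n : ℕ, (f^[n] '' U ∩ V).Nonempty

/-- A minimal subset: nonempty, closed, invariant, with no proper nonempty closed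
invariant subset. -/
def MinimalSubset (f : X → X) (M : Set X) : Prop :=
  M.Nonempty ∧ IsClosed M ∧ f '' M ⊆ M ∧
    ∀ N : Set X, N ⊆ M → N.Nonempty → IsClosed N → f '' N ⊆ N → N = M

/-- A point is almost periodic if its orbit closure is a minimal set. -/
def AlmostPeriodicPt (f : X → X) (x : X) : Prop :=
  MinimalSubset f (closure (orbitOf f x))

/-- A minimal system: every orbit closure is the whole space. -/
def MinimalSystem (f : X → X) : Prop := ∀ x : X, closure (orbitOf f x) = Set.univ

/-- A point `x` is `ε`-sensitive. -/
def SensitivePt (f : X → X) (ε : ℝ) (x : X) : Prop :=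
  ∀ δ > (0:ℝ), ∃ y : X, dist x y < δ ∧ ∃ n : ℕ, dist (f^[n] x) (f^[n] y) > ε

/-- Sensitive dependence on initial conditions. -/
def Sensitive (f : X → X) : Prop :=
  ∃ δ > (0:ℝ), ∀ U : Set X, IsOpen U → U.Nonempty →
    ∃ y ∈ U, ∃ z ∈ U, ∃ n : ℕ, dist (f^[n] y) (f^[n] z) > δ

/-- An equicontinuous system. -/
def EquicontinuousSystem (f : X → X) : Prop :=
  ∀ ε > (0:ℝ), ∃ δ > (0:ℝ), ∀ x y : X, dist x y < δ → ∀ n : ℕ, dist (f^[n] x) (f^[n] y) < ε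

/-- The separating times `N_δ(U) = {n : diam (fⁿ U) > δ}`. -/
def SepTimes (f : X → X) (δ : ℝ) (U : Set X) : Set ℕ :=
  {n : ℕ | Metric.diam (f^[n] '' U) > δ}

/-- A thick subset of ℕ. -/
def Thick (S : Set ℕ) : Prop := ∀ k : ℕ, ∃ n : ℕ, ∀ i ≤ k, n + i ∈ S

/-- A syndetic subset of ℕ. -/
def Syndetic (S : Set ℕ) : Prop := ∃ M : ℕ, ∀ n : ℕ, ∃ i ≤ M, n + i ∈ S

/-- A piecewise syndetic subset of ℕ: an intersection of a syndetic set with a thick set. -/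
def PiecewiseSyndetic (S : Set ℕ) : Prop :=
  ∃ A B : Set ℕ, Syndetic A ∧ Thick B ∧ S = A ∩ B

/-- A thickly syndetic subset of ℕ: meets every piecewise syndetic set. -/
def ThicklySyndetic (S : Set ℕ) : Prop :=
  ∀ T : Set ℕ, PiecewiseSyndetic T → (S ∩ T).Nonempty

/-- An IP subset of ℕ: contains all finite sums of distinct terms of some infinite sequence. -/
def IPSet (S : Set ℕ) : Prop :=
  ∃ seq : ℕ → ℕ, ∀ F : Finset ℕ, F.Nonempty → (∑ i ∈ F, seq i) ∈ S

/-- Strong (cofinite) sensitivity. -/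
def StronglySensitive (f : X → X) : Prop :=
  ∃ δ > (0:ℝ), ∀ U : Set X, IsOpen U → U.Nonempty → (SepTimes f δ U)ᶜ.Finite

/-- Thick sensitivity. -/
def ThicklySensitive (f : X → X) : Prop :=
  ∃ δ > (0:ℝ), ∀ U : Set X, IsOpen U → U.Nonempty → Thick (SepTimes f δ U)

/-- Syndetic sensitivity. -/
def SyndeticallySensitive (f : X → X) : Prop :=
  ∃ δ > (0:ℝ), ∀ U : Set X, IsOpen U → U.Nonempty → Syndetic (SepTimes f δ U)

/-- Thickly syndetic sensitivity. -/
def ThicklySyndeticallySensitive (f : X → X) : Prop :=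
  ∃ δ > (0:ℝ), ∀ U : Set X, IsOpen U → U.Nonempty → ThicklySyndetic (SepTimes f δ U)

/-- IP sensitivity. -/
def IPSensitive (f : X → X) : Prop :=
  ∃ δ > (0:ℝ), ∀ U : Set X, IsOpen U → U.Nonempty → IPSet (SepTimes f δ U)

/-- Multi-sensitivity. -/
def MultiSensitive (f : X → X) : Prop :=
  ∃ δ > (0:ℝ), ∀ k : ℕ, ∀ U : Fin (k + 1) → Set X,
    (∀ i, IsOpen (U i)) → (∀ i, (U i).Nonempty) →
    (⋂ i, SepTimes f δ (U i)).Nonempty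

/-- A proximal pair. -/
def ProximalPair (f : X → X) (x y : X) : Prop :=
  Filter.atTop.liminf (fun n : ℕ => dist (f^[n] x) (f^[n] y)) = 0

/-- Li–Yorke sensitivity. -/
def LiYorkeSensitive (f : X → X) : Prop :=
  ∃ δ > (0:ℝ), ∀ x : X, x ∈ closure {y : X | ProximalPair f x y ∧
    Filter.atTop.limsup (fun n : ℕ => dist (f^[n] x) (f^[n] y)) > δ}

/-- Uniform rigidity. -/
def UniformlyRigid (f : X → X) : Prop :=
  ∃ n : ℕ → ℕ, StrictMono n ∧
    TendstoUniformly (fun k x => f^[n k] x) id Filter.atTop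

/-- An equicontinuity point. -/
def EquicontinuityPt (f : X → X) (x : X) : Prop :=
  ∀ ε > (0:ℝ), ∃ δ > (0:ℝ), ∀ y : X, dist x y < δ → ∀ n : ℕ, dist (f^[n] x) (f^[n] y) < ε

/-- A syndetically equicontinuous point. -/
def SyndeticallyEquicontinuousPt (f : X → X) (x : X) : Prop :=
  ∀ ε > (0:ℝ), ∃ δ > (0:ℝ),
    Syndetic {n : ℕ | ∀ y : X, dist x y < δ → dist (f^[n] x) (f^[n] y) < ε}

/-- `𝓕`-sensitivity for a family `𝓕` of subsets of ℕ. -/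
def FSensitive (f : X → X) (𝓕 : Set (Set ℕ)) : Prop :=
  ∃ δ > (0:ℝ), ∀ U : Set X, IsOpen U → U.Nonempty → SepTimes f δ U ∈ 𝓕

end Defs

/-- The points having an open neighbourhood that every iterate of `f` maps to a set of diameter at
most `δ`. -/
def stableSet {X : Type*} [MetricSpace X] (f : X → X) (δ : ℝ) : Set X :=
  ⋃₀ {U : Set X | IsOpen U ∧ ∀ y ∈ U, ∀ z ∈ U, ∀ n : ℕ, dist (f^[n] y) (f^[n] z) ≤ δ}

lemma isOpen_stableSet {X : Type*} [MetricSpace X] (f : X → X) (δ : ℝ) :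
    IsOpen (stableSet f δ) :=
  isOpen_sUnion fun _ hU => hU.1

lemma dense_stableSet {X : Type*} [MetricSpace X] {f : X → X} (hf : Continuous f)
    (htrans : TopTransitive f) (hs : ¬ Sensitive f) {δ : ℝ} (hδ : 0 < δ) :
    Dense (stableSet f δ) := by
  obtain ⟨U, hU, hUne, hUδ⟩ : ∃ U : Set X, IsOpen U ∧ U.Nonempty ∧
      ∀ y ∈ U, ∀ z ∈ U, ∀ n : ℕ, dist (f^[n] y) (f^[n] z) ≤ δ := by
    by_contra hcon
    refine hs ⟨δ, hδ, fun U hU hUne => ?_⟩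
    by_contra hc
    refine hcon ⟨U, hU, hUne, fun y hy z hz n => ?_⟩
    by_contra hlt
    exact hc ⟨y, hy, z, hz, n, not_le.mp hlt⟩
  rw [dense_iff_inter_open]
  intro V hV hVne
  obtain ⟨n, _, ⟨x, hxV, rfl⟩, hxU⟩ := htrans V U hV hU hVne hUne
  refine ⟨x, hxV, f^[n] ⁻¹' U ∩ ⋂ i ∈ Finset.range n, f^[i] ⁻¹' ball (f^[i] x) (δ / 2),
    ⟨?_, ?_⟩, hxU, ?_⟩
  · exact (hU.preimage (hf.iterate n)).inter
      (isOpen_biInter_finset fun i _ => isOpen_ball.preimage (hf.iterate i))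
  · rintro y ⟨hyU, hy⟩ z ⟨hzU, hz⟩ m
    rcases lt_or_ge m n with hm | hm
    · have h1 : dist (f^[m] y) (f^[m] x) < δ / 2 := mem_iInter₂.mp hy m (Finset.mem_range.mpr hm)
      have h2 : dist (f^[m] z) (f^[m] x) < δ / 2 := mem_iInter₂.mp hz m (Finset.mem_range.mpr hm)
      linarith [dist_triangle_right (f^[m] y) (f^[m] z) (f^[m] x)]
    · obtain ⟨k, rfl⟩ := Nat.exists_eq_add_of_le' hm
      rw [Function.iterate_add_apply, Function.iterate_add_apply]
      exact hUδ _ hyU _ hzU k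
  · exact mem_iInter₂.mpr fun i _ => mem_ball_self (half_pos hδ)

theorem transitive_sensitive_or_almost_equicontinuous {X : Type*} [MetricSpace X]
    [CompactSpace X] (f : X → X) (hf : Continuous f) (hsurj : Function.Surjective f)
    (htrans : TopTransitive f) :
    Sensitive f ∨ ∃ x : X, EquicontinuityPt f x := by
  by_cases hs : Sensitive f
  · exact Or.inl hs
  right
  -- On the empty space sensitivity holds vacuously.
  have : Nonempty X := by
    by_contra hX
    exact hs ⟨1, one_pos, fun U _ ⟨u, _⟩ => (hX ⟨u⟩).elim⟩
  have hd : Dense (⋂ k : ℕ, stableSet f (1 / ((k : ℝ) + 1))) :=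
    dense_iInter_of_isOpen_nat (fun k => isOpen_stableSet f _)
      fun k => dense_stableSet hf htrans hs Nat.one_div_pos_of_nat
  obtain ⟨x, hx⟩ := hd.nonempty
  refine ⟨x, fun ε hε => ?_⟩
  obtain ⟨k, hk⟩ := exists_nat_one_div_lt hε
  obtain ⟨U, ⟨hU, hUδ⟩, hxU⟩ := mem_iInter.mp hx k
  obtain ⟨δ, hδ, hb⟩ := Metric.isOpen_iff.mp hU x hxU
  exact ⟨δ, hδ, fun y hy n => (hUδ x hxU y (hb (mem_ball'.mpr hy)) n).trans_lt hk⟩
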